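/- arXiv:1808.07908 — 6 statements merged into one kernel-verified Lean document; each statement's English description precedes it below -/
import Mathlib

section
/- Let n ≥ 1 be an integer, let p > n with 1/p + 1/q = 1, and let 0 < α < n < β. Let k : ℝⁿ × ℝⁿ → ℂ be measurable and suppose there is a constant C > 0 such that |k(x+y, y)| ≤ C · min(1, |x|/|y|) · |x|^(−α) · ⟨x⟩^(−(β−α)) for almost every x, y ∈ ℝⁿ with y ≠ 0. Then the mixed norm (∫_{ℝⁿ} ( ∫_{ℝⁿ} |k(x,y)|^q dx )^{p/q} dy )^{1/p} is finite, and is bounded by a constant depending only on n, p, α, β and C. -/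
open MeasureTheory
open scoped NNReal ENNReal

/-!
For `0 ≤ t ≤ 1` one has `min 1 (|x| / |y|) ≤ (|x| / |y|) ^ t`, so the kernel is dominated by
`|y| ^ (-t)` times a function of `x` that behaves like `|x| ^ (t - α)` near the origin and like
`|x| ^ (t - β)` at infinity. It lies in `L^q` for every `t` close to `n / p`, and the `p`-th power
of its slice norm is then `O(|y| ^ (-p t))`. Using one `t` below `n / p` for small `y` and one above
for large `y` makes the outer integral converge.
-/

/-- The radial weight that, for `a ≤ b`, equals `r ^ (-a)` on `(0, 1]` and `r ^ (-b)` on `[1, ∞)`.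
It serves as an integrable majorant on a space of dimension strictly between `a` and `b`. The form
as a minimum lets products with powers and powers of the weight be computed without case splits. -/
noncomputable def powerWeight (a b r : ℝ) : ℝ :=
  min (r ^ (-a)) (r ^ (-b))

section PowerWeight

variable {a b r s t : ℝ}

lemma powerWeight_nonneg (hr : 0 ≤ r) : 0 ≤ powerWeight a b r :=
  le_min (Real.rpow_nonneg hr _) (Real.rpow_nonneg hr _)

lemma powerWeight_of_le_one (hab : a ≤ b) (hr : 0 < r) (hr1 : r ≤ 1) :
    powerWeight a b r = r ^ (-a) :=
  min_eq_left (Real.rpow_le_rpow_of_exponent_ge hr hr1 (neg_le_neg hab))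

lemma powerWeight_of_one_le (hab : a ≤ b) (hr : 1 ≤ r) : powerWeight a b r = r ^ (-b) :=
  min_eq_right (Real.rpow_le_rpow_of_exponent_le hr (neg_le_neg hab))

lemma rpow_mul_powerWeight (hr : 0 < r) :
    r ^ t * powerWeight a b r = powerWeight (a - t) (b - t) r := by
  simp only [powerWeight, mul_min_of_nonneg _ _ (Real.rpow_nonneg hr.le t), ← Real.rpow_add hr,
    neg_sub, ← sub_eq_add_neg]

lemma powerWeight_rpow (hr : 0 ≤ r) (ht : 0 ≤ t) :
    powerWeight a b r ^ t = powerWeight (t * a) (t * b) r := by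
  have h_min := (Real.monotoneOn_rpow_Ici_of_exponent_nonneg ht).map_min
    (Real.rpow_nonneg hr (-a)) (Real.rpow_nonneg hr (-b))
  simp only [powerWeight, h_min, ← Real.rpow_mul hr, neg_mul, mul_comm t]

lemma rpow_mul_sqrt_one_add_sq_rpow_le_powerWeight (hab : a ≤ b) (hr : 0 < r) :
    r ^ (-a) * √(1 + r ^ 2) ^ (-(b - a)) ≤ powerWeight a b r := by
  have one_le_bracket : 1 ≤ √(1 + r ^ 2) := Real.one_le_sqrt.2 (by nlinarith)
  have le_bracket : r ≤ √(1 + r ^ 2) := Real.le_sqrt_of_sq_le (by linarith)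
  refine le_min ?_ ?_
  · exact mul_le_of_le_one_right (by positivity)
      (Real.rpow_le_one_of_one_le_of_nonpos one_le_bracket (by linarith))
  · calc r ^ (-a) * √(1 + r ^ 2) ^ (-(b - a)) ≤ r ^ (-a) * r ^ (-(b - a)) := by
          gcongr ?_ * ?_
          exact Real.rpow_le_rpow_of_nonpos hr le_bracket (by linarith)
      _ = r ^ (-b) := by rw [← Real.rpow_add hr]; ring_nf

lemma min_one_le_rpow (hr : 0 ≤ r) (ht0 : 0 ≤ t) (ht1 : t ≤ 1) : min 1 r ≤ r ^ t := by
  rcases le_total 1 r with h | h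
  · exact min_le_of_left_le (Real.one_le_rpow h ht0)
  · exact min_le_of_right_le (Real.self_le_rpow_of_le_one hr h ht1)

lemma min_one_div_mul_rpow_mul_sqrt_one_add_sq_rpow_le (hab : a ≤ b) (ht0 : 0 ≤ t) (ht1 : t ≤ 1)
    (hr : 0 < r) (hs : 0 < s) :
    min 1 (r / s) * (r ^ (-a) * √(1 + r ^ 2) ^ (-(b - a))) ≤
      s ^ (-t) * powerWeight (a - t) (b - t) r :=
  calc min 1 (r / s) * (r ^ (-a) * √(1 + r ^ 2) ^ (-(b - a)))
      ≤ (r / s) ^ t * powerWeight a b r := by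
        gcongr
        · exact min_one_le_rpow (by positivity) ht0 ht1
        · exact rpow_mul_sqrt_one_add_sq_rpow_le_powerWeight hab hr
    _ = s ^ (-t) * (r ^ t * powerWeight a b r) := by
        rw [Real.div_rpow hr.le hs.le, Real.rpow_neg hs.le]
        ring
    _ = s ^ (-t) * powerWeight (a - t) (b - t) r := by rw [rpow_mul_powerWeight hr]

lemma integrableOn_Ioi_rpow_mul_powerWeight {d : ℝ} (ha : a < d) (hb : d < b) :
    IntegrableOn (fun r ↦ r ^ (d - 1) * powerWeight a b r) (Set.Ioi 0) := by
  have hab : a ≤ b := (ha.trans hb).le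
  rw [← Set.Ioc_union_Ioi_eq_Ioi zero_le_one, integrableOn_union]
  constructor
  · have h := intervalIntegral.intervalIntegrable_rpow' (a := 0) (b := 1)
      (show -1 < d - 1 + -a by linarith)
    rw [intervalIntegrable_iff_integrableOn_Ioc_of_le zero_le_one] at h
    refine h.congr_fun (fun r hr ↦ ?_) measurableSet_Ioc
    simp only [powerWeight_of_le_one hab hr.1 hr.2, Real.rpow_add hr.1]
  · refine (integrableOn_Ioi_rpow_of_lt (show d - 1 + -b < -1 by linarith) one_pos).congr_fun
      (fun r (hr : 1 < r) ↦ ?_) measurableSet_Ioi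
    simp only [powerWeight_of_one_le hab hr.le, Real.rpow_add (one_pos.trans hr)]

end PowerWeight

lemma exists_exponents_around {d p q α β : ℝ} (hd : 0 < d) (hp : d < p) (hq : 0 < q)
    (hα : α < d / p + d / q) (hβ : d / p + d / q < β) :
    ∃ θ ∈ Set.Icc 0 1, ∃ η ∈ Set.Icc 0 1, (p * θ < d ∧ d < p * η) ∧
      (q * (α - θ) < d ∧ d < q * (β - θ)) ∧ q * (α - η) < d ∧ d < q * (β - η) := by
  have hp0 : 0 < p := hd.trans hp
  have hdp : d / p < 1 := (div_lt_one hp0).2 hp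
  obtain ⟨θ, hθ, hθp⟩ := exists_between (max_lt (div_pos hd hp0) (sub_lt_iff_lt_add.2 hα))
  obtain ⟨η, hηp, hη⟩ := exists_between (lt_min hdp (lt_sub_iff_add_lt.2 hβ))
  rw [max_lt_iff] at hθ
  rw [lt_min_iff] at hη
  refine ⟨θ, ⟨hθ.1.le, (hθp.trans hdp).le⟩, η,
    ⟨((div_pos hd hp0).trans hηp).le, hη.1.le⟩, ?_⟩
  simp only [← lt_div_iff₀' hp0, ← div_lt_iff₀' hp0, ← lt_div_iff₀' hq, ← div_lt_iff₀' hq]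
  refine ⟨⟨hθp, hηp⟩, ⟨?_, ?_⟩, ?_, ?_⟩ <;> linarith

lemma ae_ae_of_ae_prod_swap {X Y : Type*} [MeasurableSpace X] [MeasurableSpace Y]
    {μ : Measure X} {ν : Measure Y} [SFinite μ] [SFinite ν] {P : X × Y → Prop}
    (h : ∀ᵐ z ∂μ.prod ν, P z) : ∀ᵐ y ∂ν, ∀ᵐ x ∂μ, P (x, y) :=
  Measure.ae_ae_of_ae_prod (Measure.measurePreserving_swap.quasiMeasurePreserving.ae h)

section Haar

variable {E F : Type*} [NormedAddCommGroup E] [MeasurableSpace E] [BorelSpace E]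
  [NormedAddCommGroup F] {μ : Measure E}

lemma measurable_ofReal_powerWeight_norm (a b : ℝ) :
    Measurable fun x : E ↦ ENNReal.ofReal (powerWeight a b ‖x‖) := by
  unfold powerWeight
  fun_prop

lemma lintegral_enorm_rpow_le_of_translate_le [μ.IsAddRightInvariant] {f : E → F} {y : E}
    {a b q : ℝ} (hq : 0 ≤ q) {A : ℝ≥0∞}
    (hf : ∀ᵐ x ∂μ, ‖f (x + y)‖ₑ ≤ A * ENNReal.ofReal (powerWeight a b ‖x‖)) :
    ∫⁻ x, ‖f x‖ₑ ^ q ∂μ ≤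
      A ^ q * ∫⁻ x, ENNReal.ofReal (powerWeight (q * a) (q * b) ‖x‖) ∂μ := by
  rw [← lintegral_add_right_eq_self _ y,
    ← lintegral_const_mul _ (measurable_ofReal_powerWeight_norm _ _)]
  refine lintegral_mono_ae ?_
  filter_upwards [hf] with x hx
  calc ‖f (x + y)‖ₑ ^ q ≤ (A * ENNReal.ofReal (powerWeight a b ‖x‖)) ^ q := by gcongr
    _ = A ^ q * ENNReal.ofReal (powerWeight (q * a) (q * b) ‖x‖) := by
      rw [ENNReal.mul_rpow_of_nonneg _ _ hq, ENNReal.ofReal_rpow_of_nonneg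
        (powerWeight_nonneg (norm_nonneg x)) hq, powerWeight_rpow (norm_nonneg x) hq]

lemma lintegral_le_max_mul_lintegral_powerWeight {g : E → ℝ≥0∞} {M N : ℝ≥0∞} {a b : ℝ}
    (hM : ∀ᵐ y ∂μ, g y ≤ M * ENNReal.ofReal (‖y‖ ^ (-a)))
    (hN : ∀ᵐ y ∂μ, g y ≤ N * ENNReal.ofReal (‖y‖ ^ (-b))) :
    ∫⁻ y, g y ∂μ ≤ max M N * ∫⁻ y, ENNReal.ofReal (powerWeight a b ‖y‖) ∂μ := by
  rw [← lintegral_const_mul _ (measurable_ofReal_powerWeight_norm a b)]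
  refine lintegral_mono_ae ?_
  filter_upwards [hM, hN] with y hMy hNy
  rw [powerWeight, ENNReal.ofReal_mono.map_min, mul_min]
  exact le_min (hMy.trans (by gcongr; exact le_max_left M N))
    (hNy.trans (by gcongr; exact le_max_right M N))

variable {p q α β : ℝ}

lemma lintegral_slice_rpow_le [μ.IsAddRightInvariant] [NullSingletonClass μ] (C : ℝ) {t : ℝ}
    (hp : 0 ≤ p) (hq : 0 < q) (hαβ : α ≤ β) (ht : t ∈ Set.Icc 0 1)
    {f : E → F} {y : E} (hy : y ≠ 0)
    (hf : ∀ᵐ x ∂μ, ‖f (x + y)‖ ≤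
      C * min 1 (‖x‖ / ‖y‖) * ‖x‖ ^ (-α) * √(1 + ‖x‖ ^ 2) ^ (-(β - α))) :
    (∫⁻ x, ‖f x‖ₑ ^ q ∂μ) ^ (p / q) ≤
      ENNReal.ofReal C ^ p *
        (∫⁻ x, ENNReal.ofReal (powerWeight (q * (α - t)) (q * (β - t)) ‖x‖) ∂μ) ^ (p / q) *
        ENNReal.ofReal (‖y‖ ^ (-(p * t))) := by
  set J := ∫⁻ x, ENNReal.ofReal (powerWeight (q * (α - t)) (q * (β - t)) ‖x‖) ∂μ
  have translate_le : ∀ᵐ x ∂μ, ‖f (x + y)‖ₑ ≤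
      (ENNReal.ofReal C * ENNReal.ofReal (‖y‖ ^ (-t))) *
        ENNReal.ofReal (powerWeight (α - t) (β - t) ‖x‖) := by
    filter_upwards [hf, Measure.ae_ne μ 0] with x hx hx0
    rw [mul_assoc, mul_assoc] at hx
    rw [← ofReal_norm, mul_assoc, ← ENNReal.ofReal_mul (by positivity)]
    refine (ENNReal.ofReal_le_ofReal hx).trans ?_
    rw [ENNReal.ofReal_mul' (by positivity)]
    gcongr ENNReal.ofReal C * ENNReal.ofReal ?_
    exact min_one_div_mul_rpow_mul_sqrt_one_add_sq_rpow_le hαβ ht.1 ht.2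
      (norm_pos_iff.2 hx0) (norm_pos_iff.2 hy)
  calc (∫⁻ x, ‖f x‖ₑ ^ q ∂μ) ^ (p / q)
      ≤ ((ENNReal.ofReal C * ENNReal.ofReal (‖y‖ ^ (-t))) ^ q * J) ^ (p / q) := by
        gcongr
        exact lintegral_enorm_rpow_le_of_translate_le hq.le translate_le
    _ = ENNReal.ofReal C ^ p * ENNReal.ofReal (‖y‖ ^ (-t)) ^ p * J ^ (p / q) := by
        rw [ENNReal.mul_rpow_of_nonneg _ _ (by positivity), ← ENNReal.rpow_mul,
          mul_div_cancel₀ _ hq.ne', ENNReal.mul_rpow_of_nonneg _ _ hp]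
    _ = ENNReal.ofReal C ^ p * J ^ (p / q) * ENNReal.ofReal (‖y‖ ^ (-(p * t))) := by
        rw [ENNReal.ofReal_rpow_of_nonneg (x := ‖y‖ ^ (-t)) (by positivity) hp,
          ← Real.rpow_mul (norm_nonneg y), neg_mul, mul_comm t, mul_right_comm]

variable [NormedSpace ℝ E] [FiniteDimensional ℝ E] [Nontrivial E] [μ.IsAddHaarMeasure]

lemma lintegral_powerWeight_norm_lt_top {a b : ℝ} (ha : a < Module.finrank ℝ E)
    (hb : Module.finrank ℝ E < b) :
    ∫⁻ x, ENNReal.ofReal (powerWeight a b ‖x‖) ∂μ < ∞ := by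
  refine ((integrable_fun_norm_addHaar μ).2 ?_).lintegral_lt_top
  refine (integrableOn_Ioi_rpow_mul_powerWeight ha hb).congr_fun
    (fun r _ ↦ ?_) measurableSet_Ioi
  rw [smul_eq_mul, ← Real.rpow_natCast, Nat.cast_sub Module.finrank_pos, Nat.cast_one]

variable (F μ)

lemma exists_lintegral_slice_rpow_le (C : ℝ) {t : ℝ} (hp : 0 ≤ p) (hq : 0 < q) (hαβ : α ≤ β)
    (ht : t ∈ Set.Icc 0 1)
    (hαt : q * (α - t) < Module.finrank ℝ E) (hβt : Module.finrank ℝ E < q * (β - t)) :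
    ∃ M : ℝ≥0, ∀ (f : E → F) (y : E), y ≠ 0 →
      (∀ᵐ x ∂μ, ‖f (x + y)‖ ≤
        C * min 1 (‖x‖ / ‖y‖) * ‖x‖ ^ (-α) * √(1 + ‖x‖ ^ 2) ^ (-(β - α))) →
      (∫⁻ x, ‖f x‖ₑ ^ q ∂μ) ^ (p / q) ≤ M * ENNReal.ofReal (‖y‖ ^ (-(p * t))) := by
  have weight_lt_top := lintegral_powerWeight_norm_lt_top (μ := μ) hαt hβt
  lift ∫⁻ x, ENNReal.ofReal (powerWeight (q * (α - t)) (q * (β - t)) ‖x‖) ∂μ to ℝ≥0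
    using weight_lt_top.ne with J hJ
  refine ⟨C.toNNReal ^ p * J ^ (p / q), fun f y hy hf ↦ ?_⟩
  have h := lintegral_slice_rpow_le C hp hq hαβ ht hy hf
  rwa [← hJ, ENNReal.ofReal, ← ENNReal.coe_rpow_of_nonneg _ hp,
    ← ENNReal.coe_rpow_of_nonneg _ (by positivity), ← ENNReal.coe_mul] at h

theorem mixed_norm_kernel_bound_general (C : ℝ) (hp : Module.finrank ℝ E < p) (hq : 0 < q)
    (hα : α < Module.finrank ℝ E / p + Module.finrank ℝ E / q)
    (hβ : Module.finrank ℝ E / p + Module.finrank ℝ E / q < β) :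
    ∃ B : ℝ≥0, ∀ k : E × E → F,
      (∀ᵐ z ∂μ.prod μ, z.2 ≠ 0 → ‖k (z.1 + z.2, z.2)‖ ≤
        C * min 1 (‖z.1‖ / ‖z.2‖) * ‖z.1‖ ^ (-α) * √(1 + ‖z.1‖ ^ 2) ^ (-(β - α))) →
      (∫⁻ y, (∫⁻ x, ‖k (x, y)‖ₑ ^ q ∂μ) ^ (p / q) ∂μ) ^ (1 / p) ≤ B := by
  have hd : (0 : ℝ) < Module.finrank ℝ E := Nat.cast_pos.2 Module.finrank_pos
  have hp0 : 0 < p := hd.trans hp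
  have hαβ : α ≤ β := (hα.trans hβ).le
  obtain ⟨θ, hθ, η, hη, ⟨hpθ, hpη⟩, ⟨hαθ, hβθ⟩, hαη, hβη⟩ :=
    exists_exponents_around hd hp hq hα hβ
  obtain ⟨M, hM⟩ := exists_lintegral_slice_rpow_le F μ C hp0.le hq hαβ hθ hαθ hβθ
  obtain ⟨N, hN⟩ := exists_lintegral_slice_rpow_le F μ C hp0.le hq hαβ hη hαη hβη
  have weight_lt_top := lintegral_powerWeight_norm_lt_top (μ := μ) hpθ hpη
  lift ∫⁻ y, ENNReal.ofReal (powerWeight (p * θ) (p * η) ‖y‖) ∂μ to ℝ≥0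
    using weight_lt_top.ne with J hJ
  refine ⟨(max M N * J) ^ (1 / p), fun k hk ↦ ?_⟩
  rw [ENNReal.coe_rpow_of_nonneg _ (by positivity), ENNReal.coe_mul, ENNReal.coe_max, hJ]
  gcongr
  apply lintegral_le_max_mul_lintegral_powerWeight
  all_goals filter_upwards [ae_ae_of_ae_prod_swap hk, Measure.ae_ne μ 0] with y hky hy
  · exact hM (fun x ↦ k (x, y)) y hy (hky.mono fun x hx ↦ hx hy)
  · exact hN (fun x ↦ k (x, y)) y hy (hky.mono fun x hx ↦ hx hy)

end Haar

/-- Schatten-class kernel estimate: if `|k(x+y,y)| ≤ C min(1,|x|/|y|) |x|^{-α} ⟨x⟩^{-(β-α)}`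
with `0 < α < n < β` and `p > n`, `1/p + 1/q = 1`, then the mixed norm
`(∫ (∫ |k(x,y)|^q dx)^{p/q} dy)^{1/p}` is finite, bounded by a constant depending only on
`n, p, α, β, C`. -/
theorem mixed_norm_kernel_bound (n : ℕ) (hn : 1 ≤ n) (p q α β C : ℝ)
    (hpn : (n : ℝ) < p) (hpq : 1 / p + 1 / q = 1)
    (hα : 0 < α) (hαn : α < n) (hnβ : (n : ℝ) < β) (hC : 0 < C) :
    ∃ B : ℝ≥0,
      ∀ k : EuclideanSpace ℝ (Fin n) × EuclideanSpace ℝ (Fin n) → ℂ,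
        Measurable k →
        (∀ᵐ z : EuclideanSpace ℝ (Fin n) × EuclideanSpace ℝ (Fin n), z.2 ≠ 0 →
          ‖k (z.1 + z.2, z.2)‖ ≤
            C * min 1 (‖z.1‖ / ‖z.2‖) * ‖z.1‖ ^ (-α) *
              Real.sqrt (1 + ‖z.1‖ ^ 2) ^ (-(β - α))) →
        (∫⁻ y : EuclideanSpace ℝ (Fin n),
            (∫⁻ x : EuclideanSpace ℝ (Fin n), (‖k (x, y)‖₊ : ℝ≥0∞) ^ q) ^ (p / q)) ^ (1 / p)
          ≤ (B : ℝ≥0∞) := by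
  have : Nonempty (Fin n) := Fin.pos_iff_nonempty.1 hn
  have conj : p.HolderConjugate q := Real.holderConjugate_iff.2
    ⟨(Nat.one_le_cast.2 hn).trans_lt hpn, by simpa only [one_div] using hpq⟩
  have scaling : (n : ℝ) / p + n / q = n := by
    rw [div_eq_mul_one_div, div_eq_mul_one_div _ q, ← mul_add, hpq, mul_one]
  obtain ⟨B, hB⟩ := mixed_norm_kernel_bound_general (E := EuclideanSpace ℝ (Fin n)) (p := p)
    (q := q) (α := α) (β := β) ℂ volume C (by simpa) conj.symm.pos (by simpa [scaling])
    (by simpa [scaling])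
  exact ⟨B, fun k _ hk ↦ hB k hk⟩
end

section
/- Let m ≠ 0 be a real number and let η be a real number with 0 < |η| < 1/(2|m|). Then (1/(4π)) ∫_{ℝ²} (m + η|k|²) / (|k|² + (m − η|k|²)²)^{3/2} dk = (1/2)(sgn(m) + sgn(η)), where the integral is the Lebesgue integral over k = (k₁,k₂) ∈ ℝ² and |k|² = k₁² + k₂². -/
open MeasureTheory

/-!
Let `f(r)` be the integrand at `|k| = r`; in polar coordinates the integral is `2π ∫₀^∞ r f(r) dr`.
The Bloch vector of the Fermi projector at `k` points along `-(k, m - η r²)`, so the tangent of its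
latitude is `w(r) = η r - m / r`, and `r f(r)` is the derivative of its height `sin (arctan (w r))`.
The height runs from `-sgn m` at `r = 0⁺` to `sgn η` at `r = ∞`.

The function `r f(r)` is integrable because replacing `(m, η)` by `(|m|, |η|)` can only increase
`|f|`, and after that `r f(r)` is a nonnegative derivative of a function with limits at both ends.
-/

open Filter Function Real Set Topology

section ImproperIntegral

theorem hasDerivAt_update_of_ne {𝕜 E : Type*} [NontriviallyNormedField 𝕜] [NormedAddCommGroup E]
    [NormedSpace 𝕜 E] [DecidableEq 𝕜] {f : 𝕜 → E} {f' c : E} {a x : 𝕜} (hx : x ≠ a)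
    (hf : HasDerivAt f f' x) : HasDerivAt (update f a c) f' x :=
  hf.congr_of_eventuallyEq <|
    (eventually_ne_nhds hx).mono fun _ hy ↦ update_of_ne hy c f

theorem tendsto_update_atTop {α β : Type*} [Preorder α] [NoTopOrder α] [DecidableEq α]
    {f : α → β} {l : Filter β} (a : α) (c : β) (hf : Tendsto f atTop l) :
    Tendsto (update f a c) atTop l :=
  hf.congr' ((update_eventuallyEq_cofinite f a c).filter_mono atTop_le_cofinite).symm

theorem continuousWithinAt_update_Ici {α β : Type*} [TopologicalSpace α] [PartialOrder α]
    [DecidableEq α] [TopologicalSpace β] {f : α → β} {a : α} {c : β}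
    (hf : Tendsto f (𝓝[>] a) (𝓝 c)) : ContinuousWithinAt (update f a c) (Ici a) a := by
  rwa [continuousWithinAt_update_same, Ici_sdiff_left]

theorem integral_Ioi_of_hasDerivAt_of_tendsto_nhdsGT {E : Type*} [NormedAddCommGroup E]
    [NormedSpace ℝ E] [CompleteSpace E] {f f' : ℝ → E} {a : ℝ} {c l : E}
    (hderiv : ∀ x ∈ Ioi a, HasDerivAt f (f' x) x) (hint : IntegrableOn f' (Ioi a))
    (hleft : Tendsto f (𝓝[>] a) (𝓝 c)) (htop : Tendsto f atTop (𝓝 l)) :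
    ∫ x in Ioi a, f' x = l - c := by
  simpa only [update_self] using
    integral_Ioi_of_hasDerivAt_of_tendsto (continuousWithinAt_update_Ici hleft)
      (fun x hx ↦ hasDerivAt_update_of_ne (ne_of_gt hx) (hderiv x hx)) hint
      (tendsto_update_atTop a c htop)

theorem integrableOn_Ioi_deriv_of_nonneg_of_tendsto_nhdsGT {f f' : ℝ → ℝ} {a c l : ℝ}
    (hderiv : ∀ x ∈ Ioi a, HasDerivAt f (f' x) x) (hnonneg : ∀ x ∈ Ioi a, 0 ≤ f' x)
    (hleft : Tendsto f (𝓝[>] a) (𝓝 c)) (htop : Tendsto f atTop (𝓝 l)) :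
    IntegrableOn f' (Ioi a) :=
  integrableOn_Ioi_deriv_of_nonneg (continuousWithinAt_update_Ici hleft)
    (fun x hx ↦ hasDerivAt_update_of_ne (ne_of_gt hx) (hderiv x hx)) hnonneg
    (tendsto_update_atTop a c htop)

end ImproperIntegral

theorem integral_euclideanSpace_fin_two_fun_norm {E : Type*} [NormedAddCommGroup E]
    [NormedSpace ℝ E] (f : ℝ → E) :
    ∫ k : EuclideanSpace ℝ (Fin 2), f ‖k‖ = (2 * π) • ∫ r in Ioi (0 : ℝ), r • f r := by
  have volume_unit_ball : volume.real (Metric.ball (0 : EuclideanSpace ℝ (Fin 2)) 1) = π := by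
    simp [Measure.real, EuclideanSpace.volume_ball_fin_two, pi_nonneg]
  rw [integral_fun_norm_addHaar, volume_unit_ball, finrank_euclideanSpace_fin,
    ← Nat.cast_smul_eq_nsmul ℝ, smul_smul]
  simp only [Nat.cast_ofNat, Nat.add_one_sub_one, pow_one]

section SinArctan

theorem tendsto_sin_arctan_atTop : Tendsto (fun x ↦ sin (arctan x)) atTop (𝓝 1) := by
  simpa only [sin_pi_div_two, comp_def] using
    (continuous_sin.tendsto (π / 2)).comp (tendsto_arctan_atTop.mono_right nhdsWithin_le_nhds)

theorem tendsto_sin_arctan_atBot : Tendsto (fun x ↦ sin (arctan x)) atBot (𝓝 (-1)) := by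
  simpa only [sin_neg, sin_pi_div_two, comp_def] using
    (continuous_sin.tendsto (-(π / 2))).comp (tendsto_arctan_atBot.mono_right nhdsWithin_le_nhds)

theorem hasDerivAt_sin_arctan (x : ℝ) :
    HasDerivAt (fun x ↦ sin (arctan x)) (1 / (1 + x ^ 2) ^ ((3 : ℝ) / 2)) x := by
  have h_pos : 0 < 1 + x ^ 2 := by positivity
  refine (hasDerivAt_arctan x).sin.congr_deriv ?_
  rw [cos_arctan, div_mul_div_comm, one_mul, sqrt_eq_rpow, ← rpow_add_one h_pos.ne']
  norm_num

end SinArctan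

/-- The tangent of the latitude on the Bloch sphere of the Fermi projector at `|k| = r`, whose
Bloch vector points along `-(k, m - η r ^ 2)`. It is meaningful for `0 < r` only. -/
noncomputable def tanLatitude (m η r : ℝ) : ℝ := η * r - m / r

/-- The third coordinate of the Bloch vector of the Fermi projector at `|k| = r`, for `0 < r`. -/
noncomputable def blochHeight (m η r : ℝ) : ℝ := sin (arctan (tanLatitude m η r))

/-- The integrand of the Chern number, as a function of `r = |k|`. -/
noncomputable def radialBerryCurvature (m η r : ℝ) : ℝ :=
  (m + η * r ^ 2) / (r ^ 2 + (m - η * r ^ 2) ^ 2) ^ ((3 : ℝ) / 2)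

section Dirac

variable {m η r : ℝ}

theorem tanLatitude_inv (m η r : ℝ) : tanLatitude m η r⁻¹ = tanLatitude (-η) (-m) r := by
  simp only [tanLatitude, div_inv_eq_mul]
  ring

theorem tendsto_blochHeight_atTop (m η : ℝ) :
    Tendsto (blochHeight m η) atTop (𝓝 (sign η)) := by
  have tendsto_div : Tendsto (fun r : ℝ ↦ m / r) atTop (𝓝 0) := tendsto_id.const_div_atTop m
  rcases lt_trichotomy η 0 with hη | rfl | hη
  · have tendsto_tanLatitude : Tendsto (tanLatitude m η) atTop atBot :=
      (tendsto_id.const_mul_atTop_of_neg hη).atBot_add tendsto_div.neg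
    rw [sign_of_neg hη]
    exact tendsto_sin_arctan_atBot.comp tendsto_tanLatitude
  · have tendsto_tanLatitude : Tendsto (tanLatitude m 0) atTop (𝓝 0) := by
      simpa using tendsto_div.neg.congr fun r ↦ by rw [tanLatitude, zero_mul, zero_sub]
    have tendsto_sin_arctan : Tendsto (fun x ↦ sin (arctan x)) (𝓝 0) (𝓝 0) :=
      (continuous_sin.comp continuous_arctan).tendsto' 0 0 (by simp)
    rw [Real.sign_zero]
    exact tendsto_sin_arctan.comp tendsto_tanLatitude
  · have tendsto_tanLatitude : Tendsto (tanLatitude m η) atTop atTop :=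
      (tendsto_id.const_mul_atTop hη).atTop_add tendsto_div.neg
    rw [sign_of_pos hη]
    exact tendsto_sin_arctan_atTop.comp tendsto_tanLatitude

theorem blochHeight_inv (m η r : ℝ) : blochHeight m η r⁻¹ = blochHeight (-η) (-m) r := by
  rw [blochHeight, tanLatitude_inv, blochHeight]

theorem tendsto_blochHeight_nhdsGT_zero (m η : ℝ) :
    Tendsto (blochHeight m η) (𝓝[>] 0) (𝓝 (-sign m)) := by
  rw [← Real.sign_neg]
  refine ((tendsto_blochHeight_atTop (-η) (-m)).comp tendsto_inv_nhdsGT_zero).congr fun r ↦ ?_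
  rw [comp_apply, ← blochHeight_inv, inv_inv]

theorem hasDerivAt_tanLatitude (m η : ℝ) (hr : r ≠ 0) :
    HasDerivAt (tanLatitude m η) (η + m / r ^ 2) r := by
  refine (((hasDerivAt_id r).const_mul η).sub ((hasDerivAt_inv hr).const_mul m)).congr_deriv ?_
  ring

theorem sq_add_sq_eq_sq_mul_one_add_tanLatitude_sq (m η : ℝ) (hr : r ≠ 0) :
    r ^ 2 + (m - η * r ^ 2) ^ 2 = r ^ 2 * (1 + tanLatitude m η r ^ 2) := by
  rw [tanLatitude]
  field_simp
  ring

theorem mul_radialBerryCurvature_eq (m η : ℝ) (hr : 0 < r) :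
    r * radialBerryCurvature m η r =
      1 / (1 + tanLatitude m η r ^ 2) ^ ((3 : ℝ) / 2) * (η + m / r ^ 2) := by
  have rpow_sq : (r ^ 2) ^ ((3 : ℝ) / 2) = r ^ 3 := by
    rw [rpow_div_two_eq_sqrt _ (sq_nonneg r), sqrt_sq hr.le]
    norm_cast
  rw [radialBerryCurvature, sq_add_sq_eq_sq_mul_one_add_tanLatitude_sq m η hr.ne',
    mul_rpow (sq_nonneg r) (by positivity), rpow_sq]
  field_simp
  ring

theorem hasDerivAt_blochHeight (m η : ℝ) (hr : 0 < r) :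
    HasDerivAt (blochHeight m η) (r * radialBerryCurvature m η r) r := by
  rw [mul_radialBerryCurvature_eq m η hr]
  exact (hasDerivAt_sin_arctan _).comp r (hasDerivAt_tanLatitude m η hr.ne')

theorem radialBerryCurvature_nonneg (hm : 0 ≤ m) (hη : 0 ≤ η) (r : ℝ) :
    0 ≤ radialBerryCurvature m η r := by
  unfold radialBerryCurvature
  positivity

theorem abs_radialBerryCurvature_le (m η : ℝ) (hr : r ≠ 0) :
    |radialBerryCurvature m η r| ≤ radialBerryCurvature |m| |η| r := by
  have abs_mul_sq : |η * r ^ 2| = |η| * r ^ 2 := by rw [abs_mul, abs_sq]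
  have numerator_le : |m + η * r ^ 2| ≤ |m| + |η| * r ^ 2 :=
    abs_mul_sq ▸ abs_add_le m (η * r ^ 2)
  have gap_le : (|m| - |η| * r ^ 2) ^ 2 ≤ (m - η * r ^ 2) ^ 2 :=
    sq_le_sq.mpr (abs_mul_sq ▸ abs_abs_sub_abs_le_abs_sub m (η * r ^ 2))
  unfold radialBerryCurvature
  rw [abs_div, abs_of_nonneg (a := (r ^ 2 + (m - η * r ^ 2) ^ 2) ^ ((3 : ℝ) / 2)) (by positivity)]
  gcongr

theorem integrableOn_mul_radialBerryCurvature (m η : ℝ) :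
    IntegrableOn (fun r ↦ r * radialBerryCurvature m η r) (Ioi 0) := by
  have dominant : IntegrableOn (fun r ↦ r * radialBerryCurvature |m| |η| r) (Ioi 0) :=
    integrableOn_Ioi_deriv_of_nonneg_of_tendsto_nhdsGT
      (fun r hr ↦ hasDerivAt_blochHeight |m| |η| hr)
      (fun r hr ↦ mul_nonneg (le_of_lt hr)
        (radialBerryCurvature_nonneg (abs_nonneg m) (abs_nonneg η) r))
      (tendsto_blochHeight_nhdsGT_zero |m| |η|) (tendsto_blochHeight_atTop |m| |η|)
  have measurable : Measurable fun r ↦ r * radialBerryCurvature m η r := by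
    unfold radialBerryCurvature
    fun_prop
  refine dominant.mono' measurable.aestronglyMeasurable
    (ae_restrict_of_forall_mem measurableSet_Ioi fun r (hr : 0 < r) ↦ ?_)
  rw [norm_eq_abs, abs_mul, abs_of_pos hr]
  exact mul_le_mul_of_nonneg_left (abs_radialBerryCurvature_le m η hr.ne') hr.le

theorem integral_mul_radialBerryCurvature (m η : ℝ) :
    ∫ r in Ioi 0, r * radialBerryCurvature m η r = sign m + sign η := by
  rw [integral_Ioi_of_hasDerivAt_of_tendsto_nhdsGT (fun r hr ↦ hasDerivAt_blochHeight m η hr)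
    (integrableOn_mul_radialBerryCurvature m η) (tendsto_blochHeight_nhdsGT_zero m η)
    (tendsto_blochHeight_atTop m η)]
  ring

end Dirac

/-- For `m = 0` the integrand is the junk value `0 / 0` only at the origin, a null set. -/
theorem chern_integral_two_dim_general (m η : ℝ) :
    (1 / (4 * π)) *
      ∫ k : EuclideanSpace ℝ (Fin 2),
        (m + η * ‖k‖ ^ 2) / (‖k‖ ^ 2 + (m - η * ‖k‖ ^ 2) ^ 2) ^ ((3 : ℝ) / 2)
    = (1 / 2) * (sign m + sign η) := by
  have polar := integral_euclideanSpace_fin_two_fun_norm (radialBerryCurvature m η)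
  simp only [smul_eq_mul, integral_mul_radialBerryCurvature] at polar
  unfold radialBerryCurvature at polar
  rw [polar]
  field_simp
  norm_num

/-- The Chern number integral of the regularized two-dimensional Dirac Hamiltonian:
`(1/(4π)) ∫_{ℝ²} (m + η|k|²)/(|k|² + (m − η|k|²)²)^{3/2} dk = (1/2)(sgn m + sgn η)`. -/
theorem chern_integral_two_dim (m η : ℝ) (hm : m ≠ 0)
    (hη : 0 < |η|) (hη' : |η| < 1 / (2 * |m|)) :
    (1 / (4 * Real.pi)) *
      ∫ k : EuclideanSpace ℝ (Fin 2),
        (m + η * ‖k‖ ^ 2) / (‖k‖ ^ 2 + (m - η * ‖k‖ ^ 2) ^ 2) ^ ((3 : ℝ) / 2)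
    = (1 / 2) * (Real.sign m + Real.sign η) :=
  chern_integral_two_dim_general m η
end

section
/- Let m ≠ 0 be a real number. Then (1/(4π)) ∫_{ℝ²} m / (|k|² + m²)^{3/2} dk = (1/2) sgn(m), where the integral is the Lebesgue integral over k ∈ ℝ² and |k|² = k₁² + k₂². In particular this value is not an integer, so the unregularized (η = 0) Chern number of the Dirac projector is a half-integer. -/
open MeasureTheory

/-!
In polar coordinates the area element of the plane is `π d(r²)`, so a function `g (‖k‖ ^ 2)`
integrates to `π` times the integral of `g` over the half-line. For `g t = m (t + m²)^(-3/2)` the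
latter is `2 m / |m| = 2 sgn m`; dividing by `4π` leaves `sgn m / 2`.
-/

lemma setIntegral_Ioi_comp_add_right {F : Type*} [NormedAddCommGroup F] [NormedSpace ℝ F]
    (g : ℝ → F) (a c : ℝ) :
    ∫ t in Set.Ioi a, g (t + c) = ∫ t in Set.Ioi (a + c), g t := by
  simpa using (measurePreserving_add_right volume c).setIntegral_preimage_emb
    (measurableEmbedding_addRight c) g (Set.Ioi (a + c))

lemma integral_Ioi_add_rpow_of_lt {p a c : ℝ} (hp : p < -1) (hac : 0 < a + c) :
    ∫ t in Set.Ioi a, (t + c) ^ p = -(a + c) ^ (p + 1) / (p + 1) := by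
  rw [setIntegral_Ioi_comp_add_right (fun t ↦ t ^ p), integral_Ioi_rpow_of_lt hp hac]

lemma div_abs_self_eq_sign (m : ℝ) : m / |m| = Real.sign m := by
  rcases lt_trichotomy m 0 with hm | rfl | hm
  · rw [Real.sign_of_neg hm, abs_of_neg hm, div_neg, div_self hm.ne]
  · simp
  · rw [Real.sign_of_pos hm, abs_of_pos hm, div_self hm.ne']

lemma half_mul_sign_ne_intCast {m : ℝ} (hm : m ≠ 0) (z : ℤ) : 1 / 2 * Real.sign m ≠ z := by
  intro hz
  have double_eq : Real.sign m = (2 * z : ℤ) := by push_cast; linarith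
  rcases Real.sign_apply_eq_of_ne_zero m hm with hs | hs <;> rw [hs] at double_eq <;>
    norm_cast at double_eq <;> lia

section Plane

variable {E F : Type*} [NormedAddCommGroup E] [InnerProductSpace ℝ E] [MeasurableSpace E]
  [BorelSpace E] [FiniteDimensional ℝ E] [NormedAddCommGroup F] [NormedSpace ℝ F]

lemma volume_real_ball_zero_one_of_finrank_eq_two (hE : Module.finrank ℝ E = 2) :
    (volume : Measure E).real (Metric.ball 0 1) = Real.pi := by
  have : Nontrivial E := Module.nontrivial_of_finrank_pos (R := ℝ) (by lia)
  simp [Measure.real, InnerProductSpace.volume_ball_of_dim_even (k := 1) hE, Real.pi_pos.le]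

lemma integral_fun_norm_sq_of_finrank_eq_two (hE : Module.finrank ℝ E = 2) (g : ℝ → F) :
    ∫ k : E, g (‖k‖ ^ 2) = Real.pi • ∫ t in Set.Ioi (0 : ℝ), g t := by
  have : Nontrivial E := Module.nontrivial_of_finrank_pos (R := ℝ) (by lia)
  have polar : ∫ k : E, g (‖k‖ ^ 2) =
      2 • Real.pi • ∫ r in Set.Ioi (0 : ℝ), r • g (r ^ 2) := by
    simpa [hE, volume_real_ball_zero_one_of_finrank_eq_two hE] using
      integral_fun_norm_addHaar (volume : Measure E) (fun r ↦ g (r ^ 2))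
  have substitution : (2 : ℝ) • ∫ r in Set.Ioi (0 : ℝ), r • g (r ^ 2) =
      ∫ t in Set.Ioi (0 : ℝ), g t := by
    rw [← integral_comp_rpow_Ioi_of_pos (g := g) two_pos, ← integral_smul]
    norm_num [mul_smul]
  rw [polar, ← substitution, smul_comm, ofNat_smul_eq_nsmul ℝ]

lemma integral_norm_sq_add_rpow_of_finrank_eq_two
    (hE : Module.finrank ℝ E = 2) {p c : ℝ} (hp : p < -1) (hc : 0 < c) :
    ∫ k : E, (‖k‖ ^ 2 + c) ^ p = Real.pi * (-c ^ (p + 1) / (p + 1)) := by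
  rw [integral_fun_norm_sq_of_finrank_eq_two hE (fun t ↦ (t + c) ^ p),
    integral_Ioi_add_rpow_of_lt hp (by rwa [zero_add]), zero_add, smul_eq_mul]

lemma integral_div_norm_sq_add_sq_rpow_of_finrank_eq_two
    (hE : Module.finrank ℝ E = 2) {m : ℝ} (hm : m ≠ 0) :
    ∫ k : E, m / (‖k‖ ^ 2 + m ^ 2) ^ ((3 : ℝ) / 2) = 2 * Real.pi * Real.sign m := by
  have sq_rpow_neg_half : (m ^ 2) ^ (-(3 / 2) + 1 : ℝ) = |m|⁻¹ := by
    rw [show (-(3 / 2) + 1 : ℝ) = -(1 / 2) by norm_num, Real.rpow_neg (sq_nonneg m),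
      ← Real.sqrt_eq_rpow, Real.sqrt_sq_eq_abs]
  calc ∫ k : E, m / (‖k‖ ^ 2 + m ^ 2) ^ ((3 : ℝ) / 2)
      = m * ∫ k : E, (‖k‖ ^ 2 + m ^ 2) ^ (-(3 / 2) : ℝ) := by
        rw [← integral_const_mul]
        congr with k
        rw [Real.rpow_neg (by positivity), div_eq_mul_inv]
    _ = m * (Real.pi * (-|m|⁻¹ / (-(3 / 2) + 1))) := by
        rw [integral_norm_sq_add_rpow_of_finrank_eq_two hE (by norm_num) (by positivity),
          sq_rpow_neg_half]
    _ = 2 * Real.pi * (m / |m|) := by ring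
    _ = 2 * Real.pi * Real.sign m := by rw [div_abs_self_eq_sign]

end Plane

/-- The unregularized (η = 0) Chern number of the two-dimensional Dirac projector:
`(1/(4π)) ∫_{ℝ²} m/(|k|² + m²)^{3/2} dk = (1/2) sgn(m)`, a half-integer, hence not an
integer. -/
theorem chern_integral_unregularized (m : ℝ) (hm : m ≠ 0) :
    (1 / (4 * Real.pi)) *
      ∫ k : EuclideanSpace ℝ (Fin 2), m / (‖k‖ ^ 2 + m ^ 2) ^ ((3 : ℝ) / 2)
    = (1 / 2) * Real.sign m ∧
    ¬ ∃ z : ℤ, (1 / (4 * Real.pi)) *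
      ∫ k : EuclideanSpace ℝ (Fin 2), m / (‖k‖ ^ 2 + m ^ 2) ^ ((3 : ℝ) / 2) = (z : ℝ) := by
  have value : (1 / (4 * Real.pi)) *
      ∫ k : EuclideanSpace ℝ (Fin 2), m / (‖k‖ ^ 2 + m ^ 2) ^ ((3 : ℝ) / 2)
      = (1 / 2) * Real.sign m := by
    rw [integral_div_norm_sq_add_sq_rpow_of_finrank_eq_two finrank_euclideanSpace_fin hm]
    field_simp
    norm_num
  refine ⟨value, ?_⟩
  rintro ⟨z, hz⟩
  exact half_mul_sign_ne_intCast hm z (value.symm.trans hz)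
end

section
/- Let U ⊆ ℝ^d be open, k₀ ∈ U, and let H : U → M_N(ℂ) take Hermitian values and be differentiable at k₀, and let e : U → ℝ be positive and differentiable at k₀, with H(k)² = e(k)²·I_N for all k ∈ U. Define P : U → M_N(ℂ) by P(k) = (1/2)I_N − H(k)/(2e(k)). Then P is differentiable at k₀ and for every direction j ∈ {1,…,d} the commutator identity [P(k₀), ∂_j P(k₀)] = (1/(4e(k₀)²))·[H(k₀), ∂_j H(k₀)] holds, where ∂_j denotes the partial derivative in the j-th coordinate and [A,B] = AB − BA. -/
open Matrix

attribute [local instance] Matrix.normedAddCommGroup Matrix.normedSpace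

/-! With `a = 1 / (2e)` the Fermi projector is `P = 1/2 - a H`, so
`∂P = -(a ∂H + (∂a) H)`. The scalar `1/2` is central and `(∂a) H` commutes with `H`; hence the
only term left in `[P, ∂P]` is `a² [H, ∂H]`. -/

theorem lie_sub_smul_neg_smul_add_smul {R L : Type*} [CommRing R] [LieRing L] [LieAlgebra R L]
    {z : L} (hz : ∀ w : L, ⁅z, w⁆ = 0) (a b : R) (x y : L) :
    ⁅z - a • x, -(a • y + b • x)⁆ = a ^ 2 • ⁅x, y⁆ := by
  calc ⁅z - a • x, -(a • y + b • x)⁆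
      = ⁅a • x, a • y⁆ + ⁅a • x, b • x⁆ := by
        rw [sub_lie, hz, zero_sub, lie_neg, neg_neg, lie_add]
    _ = a ^ 2 • ⁅x, y⁆ := by
        simp only [smul_lie, lie_smul, lie_self, smul_zero, add_zero, smul_smul, sq]

section Derivative

variable {𝕜 E : Type*} [NontriviallyNormedField 𝕜] [NormedAddCommGroup E] [NormedSpace 𝕜 E]
  {k₀ : E}

theorem fderiv_const_sub_smul_apply {F : Type*} [NormedAddCommGroup F] [NormedSpace 𝕜 F]
    {a : E → 𝕜} {f : E → F} (ha : DifferentiableAt 𝕜 a k₀) (hf : DifferentiableAt 𝕜 f k₀)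
    (c : F) (v : E) :
    fderiv 𝕜 (fun k => c - a k • f k) k₀ v =
      -(a k₀ • fderiv 𝕜 f k₀ v + fderiv 𝕜 a k₀ v • f k₀) := by
  simp [fderiv_const_sub, fderiv_fun_smul ha hf]

variable {n R : Type*} [Fintype n] [NormedRing R] [NormedAlgebra 𝕜 R] {H : E → Matrix n n R}

theorem lie_fderiv_const_sub_smul {Z : Matrix n n R} (hZ : ∀ B : Matrix n n R, ⁅Z, B⁆ = 0)
    {a : E → 𝕜} (ha : DifferentiableAt 𝕜 a k₀) (hH : DifferentiableAt 𝕜 H k₀) (v : E) :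
    ⁅Z - a k₀ • H k₀, fderiv 𝕜 (fun k => Z - a k • H k) k₀ v⁆ =
      a k₀ ^ 2 • ⁅H k₀, fderiv 𝕜 H k₀ v⁆ := by
  have deriv_eq : fderiv 𝕜 (fun k => Z - a k • H k) k₀ v =
      -(a k₀ • fderiv 𝕜 H k₀ v + fderiv 𝕜 a k₀ v • H k₀) :=
    fderiv_const_sub_smul_apply ha hH Z v
  classical
  let : LieRing (Matrix n n R) := LieRing.ofAssociativeRing
  rw [deriv_eq]
  exact lie_sub_smul_neg_smul_add_smul hZ _ _ _ _

theorem fermi_projector_commutator_general [DecidableEq n] [NeZero (2 : 𝕜)] {e : E → 𝕜}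
    (hH : DifferentiableAt 𝕜 H k₀) (he : DifferentiableAt 𝕜 e k₀) (he₀ : e k₀ ≠ 0) :
    let P : E → Matrix n n R :=
      fun k => ((1 : 𝕜) / 2) • (1 : Matrix n n R) - (1 / (2 * e k)) • H k
    DifferentiableAt 𝕜 P k₀ ∧
    ∀ v : E, ⁅P k₀, fderiv 𝕜 P k₀ v⁆ = (1 / (4 * e k₀ ^ 2)) • ⁅H k₀, fderiv 𝕜 H k₀ v⁆ := by
  intro P
  have ha : DifferentiableAt 𝕜 (fun k => 1 / (2 * e k)) k₀ := by
    simpa only [one_div] using (he.const_mul 2).fun_inv (mul_ne_zero two_ne_zero he₀)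
  have sq_a : (1 / (2 * e k₀)) ^ 2 = 1 / (4 * e k₀ ^ 2) := by
    rw [div_pow, mul_pow, one_pow]
    norm_num
  have half_central (B : Matrix n n R) : ⁅((1 : 𝕜) / 2) • (1 : Matrix n n R), B⁆ = 0 := by
    rw [Ring.lie_def, smul_one_mul, mul_smul_one, sub_self]
  refine ⟨(ha.fun_smul hH).const_sub _, fun v => ?_⟩
  rw [← sq_a]
  exact lie_fderiv_const_sub_smul half_central ha hH v

end Derivative

/-- If `H(k)² = e(k)²·I` with `H` Hermitian-valued and `e > 0` on an open set `U ∋ k₀`,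
both differentiable at `k₀`, then the Fermi projector `P = (1/2)I − H/(2e)` is
differentiable at `k₀` and `[P, ∂ⱼP] = (1/(4e²))[H, ∂ⱼH]` at `k₀`. -/
theorem fermi_projector_commutator (d N : ℕ)
    (U : Set (EuclideanSpace ℝ (Fin d))) (hU : IsOpen U)
    (k₀ : EuclideanSpace ℝ (Fin d)) (hk₀ : k₀ ∈ U)
    (H : EuclideanSpace ℝ (Fin d) → Matrix (Fin N) (Fin N) ℂ)
    (e : EuclideanSpace ℝ (Fin d) → ℝ)
    (hHerm : ∀ k ∈ U, (H k).IsHermitian)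
    (hHdiff : DifferentiableAt ℝ H k₀)
    (hepos : ∀ k ∈ U, 0 < e k)
    (hediff : DifferentiableAt ℝ e k₀)
    (hsq : ∀ k ∈ U, H k * H k = (e k ^ 2) • (1 : Matrix (Fin N) (Fin N) ℂ)) :
    let P : EuclideanSpace ℝ (Fin d) → Matrix (Fin N) (Fin N) ℂ :=
      fun k => ((1 : ℝ) / 2) • (1 : Matrix (Fin N) (Fin N) ℂ) - (1 / (2 * e k)) • H k
    DifferentiableAt ℝ P k₀ ∧
    ∀ j : Fin d,
      P k₀ * fderiv ℝ P k₀ (EuclideanSpace.single j 1)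
          - fderiv ℝ P k₀ (EuclideanSpace.single j 1) * P k₀
        = (1 / (4 * e k₀ ^ 2)) •
            (H k₀ * fderiv ℝ H k₀ (EuclideanSpace.single j 1)
              - fderiv ℝ H k₀ (EuclideanSpace.single j 1) * H k₀) := by
  have general := fermi_projector_commutator_general hHdiff hediff (hepos k₀ hk₀).ne'
  exact ⟨general.1, fun j => general.2 (EuclideanSpace.single j 1)⟩
end

section
/- Let d = 2κ be even and let γ_d¹, …, γ_d^{d+1} be the Dirac matrices of size 2^κ given by the recursive construction. Let h : ℝ^d → ℝ^{d+1} be nonvanishing and differentiable at a point k, and define P(k') = (1/2)I − (1/(2|h(k')|)) Σ_{j=1}^{d+1} h_j(k') γ_d^j for k' near k. Let L(k) be the (d+1)×(d+1) real matrix whose first row is h(k) and whose (j+1)-th row is the partial derivative ∂h/∂k_j(k), 1 ≤ j ≤ d. Then Σ_{ρ ∈ S_d} sgn(ρ) · trace( P(k) · ∂_{ρ(1)}P(k) · ⋯ · ∂_{ρ(d)}P(k) ) = −((2i)^{d/2} · d! / 2^{d+1}) · det(L(k)) / |h(k)|^{d+1}, where S_d is the symmetric group on d letters and ∂_j denotes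 the partial derivative in the j-th coordinate. -/
open Matrix

/-- Pauli matrix σ₁. -/
noncomputable def pauli1 : Matrix (Fin 2) (Fin 2) ℂ := !![0, 1; 1, 0]

/-- Pauli matrix σ₂. -/
noncomputable def pauli2 : Matrix (Fin 2) (Fin 2) ℂ := !![0, -Complex.I; Complex.I, 0]

/-- Pauli matrix σ₃. -/
noncomputable def pauli3 : Matrix (Fin 2) (Fin 2) ℂ := !![1, 0; 0, -1]

/-- Re-index a square matrix along an equality of dimensions. -/
noncomputable def castSq {m n : ℕ} (h : m = n) (A : Matrix (Fin m) (Fin m) ℂ) :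
    Matrix (Fin n) (Fin n) ℂ :=
  Matrix.reindex (finCongr h) (finCongr h) A

/-- Kronecker product of a 2×2 matrix with an n×n matrix, with indices flattened. -/
noncomputable def kron2 {n : ℕ} (A : Matrix (Fin 2) (Fin 2) ℂ) (B : Matrix (Fin n) (Fin n) ℂ) :
    Matrix (Fin (2 * n)) (Fin (2 * n)) ℂ :=
  Matrix.reindex finProdFinEquiv finProdFinEquiv (Matrix.kroneckerMap (· * ·) A B)

/-- The recursively constructed Dirac matrices: `diracGamma κ j` is the `j`-th Dirac matrix
(1-indexed, `1 ≤ j ≤ 2κ+1`) of size `2^κ`. For κ = 1 these are the Pauli matrices; the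
recursion is `γ_{d+2}^j = σ₁ ⊗ γ_d^j` (`1 ≤ j ≤ d+1`), `γ_{d+2}^{d+2} = σ₂ ⊗ I`,
`γ_{d+2}^{d+3} = σ₃ ⊗ I` for `d = 2κ`. -/
noncomputable def diracGamma : (κ : ℕ) → ℕ → Matrix (Fin (2 ^ κ)) (Fin (2 ^ κ)) ℂ
  | 0, _ => 1
  | 1, j => castSq (by norm_num)
      (if j = 1 then pauli1 else if j = 2 then pauli2 else if j = 3 then pauli3 else 1)
  | (κ + 2), j => castSq (by rw [pow_succ]; ring)
      (if j ≤ 2 * (κ + 1) + 1 then kron2 pauli1 (diracGamma (κ + 1) j)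
       else if j = 2 * (κ + 1) + 2 then kron2 pauli2 1
       else if j = 2 * (κ + 1) + 3 then kron2 pauli3 1
       else 1)

attribute [local instance] Matrix.normedAddCommGroup Matrix.normedSpace

/-!
For an odd number `n + 1` of anticommuting involutions `γ₀, …, γₙ` and vectors `v₀, …, vₙ`, the
trace of `(v₀·γ) ⋯ (vₙ·γ)` is `det v` times the trace of `γ₀ ⋯ γₙ`: both sides are multilinear,
anticommutation produces the sign of a permutation, and products that omit a generator are
traceless. In the antisymmetrized trace of `P ∂P ⋯ ∂P` the scalar part `1/2` of the first factor
drops out, because the trace is cyclic while a cycle of even length is odd. Differentiating the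
normalization `1/|h|` only adds multiples of the row `h` to the other rows of the determinant.
Finally, `σ₁ σ₂ σ₃ = i` and the Dirac recursion give `γ¹ ⋯ γ^{2κ+1} = i^κ`, of trace `(2i)^κ`.
-/

section Anticommuting

variable {A : Type*} [Ring A]

theorem prod_ofFn_comp_swap_of_anticomm {n : ℕ} (i : Fin n) (g : Fin (n + 1) → A)
    (hg : g i.castSucc * g i.succ = -(g i.succ * g i.castSucc)) :
    (List.ofFn (g ∘ Equiv.swap i.castSucc i.succ)).prod = -(List.ofFn g).prod := by
  induction n with
  | zero => exact i.elim0
  | succ n ih =>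
    cases i using Fin.cases with
    | zero =>
      have swap_tail (j : Fin n) :
          Equiv.swap (0 : Fin (n + 2)) (Fin.succ 0) j.succ.succ = j.succ.succ :=
        Equiv.swap_apply_of_ne_of_ne (Fin.succ_ne_zero _)
          ((Fin.succ_injective _).ne (Fin.succ_ne_zero j))
      rw [Fin.castSucc_zero] at hg ⊢
      simp only [List.ofFn_succ, List.prod_cons, Function.comp_apply, Equiv.swap_apply_left,
        Equiv.swap_apply_right, swap_tail, ← mul_assoc, hg, neg_mul, neg_neg]
    | succ i =>
      rw [Fin.castSucc_succ] at hg ⊢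
      have swap_zero : Equiv.swap i.castSucc.succ i.succ.succ 0 = 0 :=
        Equiv.swap_apply_of_ne_of_ne (Fin.succ_ne_zero _).symm (Fin.succ_ne_zero _).symm
      have swap_tail : (fun j : Fin (n + 1) ↦ g (Equiv.swap i.castSucc.succ i.succ.succ j.succ)) =
          (g ∘ Fin.succ) ∘ Equiv.swap i.castSucc i.succ :=
        funext fun j ↦ congrArg g ((Fin.succ_injective _).map_swap _ _ _).symm
      rw [List.ofFn_succ, List.ofFn_succ (f := g), List.prod_cons, List.prod_cons]
      simp only [Function.comp_apply, swap_zero, swap_tail]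
      rw [ih i (g ∘ Fin.succ) hg, mul_neg]
      rfl

theorem prod_ofFn_comp_perm_of_anticomm {n : ℕ} {g : Fin n → A}
    (hg : Pairwise fun i j ↦ g i * g j = -(g j * g i)) (σ : Equiv.Perm (Fin n)) :
    (List.ofFn (g ∘ σ)).prod = (Equiv.Perm.sign σ : ℤ) • (List.ofFn g).prod := by
  cases n with
  | zero => simp [Subsingleton.elim σ 1]
  | succ n =>
    have hσ : σ ∈ Submonoid.closure
        (Set.range fun i : Fin n ↦ Equiv.swap i.castSucc i.succ) := by
      simp [Equiv.Perm.mclosure_swap_castSucc_succ]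
    induction hσ using Submonoid.closure_induction_right with
    | one => simp
    | mul_right σ _ _ hswap ih =>
      obtain ⟨i, rfl⟩ := hswap
      have hne : i.castSucc ≠ i.succ := Fin.castSucc_lt_succ.ne
      rw [Equiv.Perm.coe_mul, ← Function.comp_assoc,
        prod_ofFn_comp_swap_of_anticomm i (g ∘ σ) (hg (σ.injective.ne hne)), ih]
      simp [Equiv.Perm.sign_swap hne]

theorem mul_list_prod_of_anticomm {a : A} {l : List A} (h : ∀ x ∈ l, a * x = -(x * a)) :
    a * l.prod = (-1) ^ l.length * (l.prod * a) := by
  induction l with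
  | nil => simp
  | cons x l ih =>
    have hl := ih fun y hy ↦ h y (List.mem_cons_of_mem x hy)
    calc a * (x :: l).prod = -(x * (a * l.prod)) := by
          rw [List.prod_cons, ← mul_assoc, h x List.mem_cons_self, neg_mul, mul_assoc]
      _ = -(x * (-1) ^ l.length * (l.prod * a)) := by rw [hl, mul_assoc]
      _ = (-1) ^ (x :: l).length * ((x :: l).prod * a) := by
          rw [((Commute.neg_one_right x).pow_right _).eq, List.length_cons, pow_succ',
            List.prod_cons]
          simp only [mul_assoc, neg_mul, one_mul]

end Anticommuting

theorem det_cons_comp_perm {R : Type*} [CommRing R] {n : ℕ} (x : Fin (n + 1) → R)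
    (y : Fin n → Fin (n + 1) → R) (ρ : Equiv.Perm (Fin n)) :
    (Matrix.of (Fin.cons x fun i ↦ y (ρ i))).det =
      (Equiv.Perm.sign ρ : ℤ) • (Matrix.of (Fin.cons x y)).det := by
  have rows_eq : Matrix.of (Fin.cons x fun i ↦ y (ρ i)) =
      (Matrix.of (Fin.cons x y)).submatrix (Equiv.Perm.decomposeFin.symm (0, ρ)) id := by
    ext i j
    cases i using Fin.cases <;> simp
  rw [rows_eq, Matrix.det_permute, Equiv.Perm.decomposeFin.symm_sign, if_pos rfl, one_mul,
    zsmul_eq_mul]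

theorem det_cons_smul_add_smul {R : Type*} [CommRing R] {n : ℕ} (c : R) (b : Fin n → R)
    (x : Fin (n + 1) → R) (y : Fin n → Fin (n + 1) → R) :
    (Matrix.of (Fin.cons (c • x) fun j ↦ c • y j + b j • x)).det =
      c ^ (n + 1) * (Matrix.of (Fin.cons x y)).det := by
  calc (Matrix.of (Fin.cons (c • x) fun j ↦ c • y j + b j • x)).det
      = c * (Matrix.of (Fin.cons x fun j ↦ c • y j + b j • x)).det := by
        have scale_head := Matrix.det_mul_column (Fin.cons c 1)
          (Matrix.of (Fin.cons x fun j ↦ c • y j + b j • x))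
        simp only [Fin.prod_univ_succ, Fin.cons_zero, Fin.cons_succ, Pi.one_apply,
          Finset.prod_const_one, mul_one] at scale_head
        rw [← scale_head]
        congr 1
        ext i l
        cases i using Fin.cases <;> simp
    _ = c * (Matrix.of (Fin.cons x fun j ↦ c • y j)).det := by
        congr 1
        refine Matrix.det_eq_of_forall_row_eq_smul_add_const (Fin.cons 0 b) 0 rfl fun i l ↦ ?_
        cases i using Fin.cases <;> simp
    _ = c * (c ^ n * (Matrix.of (Fin.cons x y)).det) := by
        have scale_tail := Matrix.det_mul_column (Fin.cons 1 fun _ ↦ c) (Matrix.of (Fin.cons x y))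
        simp only [Fin.prod_univ_succ, Fin.cons_zero, Fin.cons_succ, Finset.prod_const,
          Finset.card_univ, Fintype.card_fin, one_mul] at scale_tail
        rw [← scale_tail]
        congr 2
        ext i l
        cases i using Fin.cases <;> simp
    _ = c ^ (n + 1) * (Matrix.of (Fin.cons x y)).det := by ring

/-- A family of pairwise anticommuting square roots of `1` in a ring: the generators of a
(not necessarily faithful) representation of a Euclidean Clifford algebra. -/
structure IsCliffordFamily {ι A : Type*} [Ring A] (γ : ι → A) : Prop where
  mul_self (i : ι) : γ i * γ i = 1
  anticomm : Pairwise fun i j ↦ γ i * γ j = -(γ j * γ i)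

section Tracial

variable {R A M : Type*} [CommRing R] [Ring A] [Algebra R A] [AddCommGroup M] [Module R M]
  {τ : A →ₗ[R] M}

theorem tracial_prod_ofFn_comp_finRotate (hτ : ∀ a b, τ (a * b) = τ (b * a)) {n : ℕ}
    (a : Fin n → A) : τ (List.ofFn (a ∘ finRotate n)).prod = τ (List.ofFn a).prod := by
  cases n with
  | zero => simp
  | succ n =>
    have rotate_eq_snoc : a ∘ finRotate (n + 1) = Fin.snoc (α := fun _ ↦ A) (Fin.tail a) (a 0) := by
      rw [Fin.snoc_eq_cons_rotate, Fin.cons_self_tail]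
      rfl
    rw [rotate_eq_snoc, List.ofFn_succ', List.ofFn_succ]
    simp only [Fin.snoc_castSucc, Fin.snoc_last, List.prod_concat, List.prod_cons]
    exact hτ _ _

variable [IsAddTorsionFree M]

-- Rotating the factors preserves the trace, while a cycle of even length is an odd permutation.
theorem sum_sign_smul_tracial_prod_eq_zero (hτ : ∀ a b, τ (a * b) = τ (b * a)) {n : ℕ}
    (hn : n ≠ 0) (hn_even : Even n) (a : Fin n → A) :
    ∑ ρ : Equiv.Perm (Fin n), (Equiv.Perm.sign ρ : ℤ) • τ (List.ofFn fun i ↦ a (ρ i)).prod = 0 := by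
  have sign_rotate : Equiv.Perm.sign (finRotate n) = -1 := by
    rw [sign_finRotate, (Nat.Even.sub_odd (Nat.one_le_iff_ne_zero.mpr hn) hn_even
      odd_one).neg_one_pow]
  refine self_eq_neg.mp ?_
  conv_lhs => rw [← Equiv.sum_comp (Equiv.mulRight (finRotate n))]
  rw [← Finset.sum_neg_distrib]
  refine Finset.sum_congr rfl fun ρ _ ↦ ?_
  have rotate_trace : τ (List.ofFn fun i ↦ a (ρ (finRotate n i))).prod =
      τ (List.ofFn fun i ↦ a (ρ i)).prod := tracial_prod_ofFn_comp_finRotate hτ (a ∘ ρ)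
  simp only [Equiv.coe_mulRight, Equiv.Perm.mul_apply, rotate_trace, map_mul, sign_rotate,
    mul_neg_one, Units.val_neg, neg_smul]

namespace IsCliffordFamily

-- Conjugation by a missing `γ m` preserves the trace but negates a product of odd length.
theorem tracial_prod_eq_zero_of_not_surjective {ι : Type*} {γ : ι → A} (hγ : IsCliffordFamily γ)
    (hτ : ∀ a b, τ (a * b) = τ (b * a)) {n : ℕ} (hn : Odd n) {f : Fin n → ι}
    (hf : ¬ Function.Surjective f) : τ (List.ofFn (γ ∘ f)).prod = 0 := by
  obtain ⟨m, hm⟩ : ∃ m, ∀ i, f i ≠ m := by simpa [Function.Surjective] using hf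
  set p := (List.ofFn (γ ∘ f)).prod
  have anticomm_prod : γ m * p = -(p * γ m) := by
    rw [mul_list_prod_of_anticomm, List.length_ofFn, hn.neg_one_pow, neg_one_mul]
    simpa [List.forall_mem_ofFn_iff] using fun i ↦ hγ.anticomm (hm i).symm
  refine self_eq_neg.mp ?_
  calc τ p = τ (γ m * (γ m * p)) := by rw [← mul_assoc, hγ.mul_self, one_mul]
    _ = τ (γ m * p * γ m) := hτ _ _
    _ = -τ p := by rw [anticomm_prod, neg_mul, mul_assoc, hγ.mul_self, mul_one, map_neg]

theorem tracial_prod_linearCombination {n : ℕ} {γ : Fin n → A} (hγ : IsCliffordFamily γ)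
    (hτ : ∀ a b, τ (a * b) = τ (b * a)) (hn : Odd n) (v : Fin n → Fin n → R) :
    τ (List.ofFn fun i ↦ Fintype.linearCombination R γ (v i)).prod =
      (Matrix.of v).det • τ (List.ofFn γ).prod := by
  let traceProd : MultilinearMap R (fun _ : Fin n ↦ Fin n → R) M :=
    τ.compMultilinearMap ((MultilinearMap.mkPiAlgebraFin R n A).compLinearMap
      fun _ ↦ Fintype.linearCombination R γ)
  let detSmul : (Fin n → R) [⋀^Fin n]→ₗ[R] M :=
    (LinearMap.toSpanSingleton R M (τ (List.ofFn γ).prod)).compAlternatingMap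
      Matrix.detRowAlternating
  suffices traceProd = detSmul.toMultilinearMap from congrArg (· v) this
  refine Module.Basis.ext_multilinear (fun _ ↦ Pi.basisFun R (Fin n)) fun f ↦ ?_
  have traceProd_basis : traceProd (fun i ↦ Pi.basisFun R (Fin n) (f i)) =
      τ (List.ofFn (γ ∘ f)).prod := by
    simp [traceProd, Function.comp_def]
  rw [traceProd_basis, AlternatingMap.coe_multilinearMap]
  by_cases hf : Function.Bijective f
  · obtain ⟨σ, rfl⟩ : ∃ σ : Equiv.Perm (Fin n), f = σ := ⟨Equiv.ofBijective f hf, rfl⟩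
    have detSmul_basis : detSmul (Pi.basisFun R (Fin n)) = τ (List.ofFn γ).prod := by
      have basis_eq_one : ⇑(Pi.basisFun R (Fin n)) = (1 : Matrix (Fin n) (Fin n) R) := by
        ext i j
        simp [Matrix.one_apply, Pi.single_apply, eq_comm]
      rw [basis_eq_one]
      exact (congrArg (· • _) Matrix.det_one).trans (one_smul R _)
    rw [prod_ofFn_comp_perm_of_anticomm hγ.anticomm, map_zsmul, ← detSmul_basis]
    exact (detSmul.map_perm (Pi.basisFun R (Fin n)) σ).symm
  · have hf_inj : ¬ Function.Injective f := mt Finite.injective_iff_bijective.mp hf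
    rw [hγ.tracial_prod_eq_zero_of_not_surjective hτ hn
      (mt Finite.injective_iff_surjective.mpr hf_inj), detSmul.map_eq_zero_of_not_injective]
    exact mt Function.Injective.of_comp hf_inj

theorem sum_sign_smul_tracial_mul_prod {n : ℕ} {γ : Fin (n + 1) → A} (hγ : IsCliffordFamily γ)
    (hτ : ∀ a b, τ (a * b) = τ (b * a)) (hn : n ≠ 0) (hn_even : Even n) (r : R)
    (x : Fin (n + 1) → R) (y : Fin n → Fin (n + 1) → R) :
    ∑ ρ : Equiv.Perm (Fin n), (Equiv.Perm.sign ρ : ℤ) •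
        τ ((r • 1 + Fintype.linearCombination R γ x) *
          (List.ofFn fun i ↦ Fintype.linearCombination R γ (y (ρ i))).prod) =
      n.factorial • (Matrix.of (Fin.cons x y)).det • τ (List.ofFn γ).prod := by
  set S := Fintype.linearCombination R γ
  have scalar_part : ∑ ρ : Equiv.Perm (Fin n), (Equiv.Perm.sign ρ : ℤ) •
      τ (r • 1 * (List.ofFn fun i ↦ S (y (ρ i))).prod) = 0 := by
    simp only [smul_mul_assoc, one_mul, map_smul, smul_comm _ r, ← Finset.smul_sum]
    rw [sum_sign_smul_tracial_prod_eq_zero hτ hn hn_even fun i ↦ S (y i), smul_zero]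
  have vector_part (ρ : Equiv.Perm (Fin n)) : (Equiv.Perm.sign ρ : ℤ) •
      τ (S x * (List.ofFn fun i ↦ S (y (ρ i))).prod) =
        (Matrix.of (Fin.cons x y)).det • τ (List.ofFn γ).prod := by
    have trace_cons := hγ.tracial_prod_linearCombination hτ hn_even.add_one
      (Fin.cons x fun i ↦ y (ρ i))
    rw [List.ofFn_succ, List.prod_cons] at trace_cons
    simp only [Fin.cons_zero, Fin.cons_succ] at trace_cons
    rw [trace_cons, det_cons_comp_perm, smul_assoc, smul_smul, Int.units_coe_mul_self, one_smul]
  simp only [add_mul, map_add, smul_add, Finset.sum_add_distrib, scalar_part, vector_part,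
    zero_add, Finset.sum_const, Finset.card_univ, Fintype.card_perm, Fintype.card_fin]

end IsCliffordFamily

end Tracial

section Dirac

open scoped Kronecker

namespace IsCliffordFamily

theorem map {ι A B F : Type*} [Ring A] [Ring B] [FunLike F A B] [RingHomClass F A B] (φ : F)
    {γ : ι → A} (hγ : IsCliffordFamily γ) : IsCliffordFamily (φ ∘ γ) where
  mul_self i := by simp [← map_mul, hγ.mul_self]
  anticomm i j hij := by simp [← map_mul, ← map_neg, hγ.anticomm hij]

theorem snoc {A : Type*} [Ring A] {n : ℕ} {γ : Fin n → A} (hγ : IsCliffordFamily γ) {a : A}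
    (ha : a * a = 1) (ha_anticomm : ∀ i, γ i * a = -(a * γ i)) :
    IsCliffordFamily (Fin.snoc γ a : Fin (n + 1) → A) where
  mul_self i := by
    cases i using Fin.lastCases <;> simp [ha, hγ.mul_self]
  anticomm i j hij := by
    cases i using Fin.lastCases with
    | last =>
      cases j using Fin.lastCases with
      | last => exact absurd rfl hij
      | cast j => simp [ha_anticomm]
    | cast i =>
      cases j using Fin.lastCases with
      | last => simp [ha_anticomm]
      | cast j => simpa using hγ.anticomm fun h ↦ hij (congrArg Fin.castSucc h)

theorem kronecker {ι m N R : Type*} [CommRing R] [Fintype m] [DecidableEq m] [Fintype N]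
    [DecidableEq N] {γ : ι → Matrix N N R} (hγ : IsCliffordFamily γ) {B : Matrix m m R}
    (hB : B * B = 1) : IsCliffordFamily fun i ↦ B ⊗ₖ γ i where
  mul_self i := by
    rw [← Matrix.mul_kronecker_mul, hB, hγ.mul_self, Matrix.one_kronecker_one]
  anticomm i j hij := by
    beta_reduce
    rw [← Matrix.mul_kronecker_mul, ← Matrix.mul_kronecker_mul, hγ.anticomm hij,
      ← neg_one_smul R, Matrix.kronecker_smul, neg_one_smul]

end IsCliffordFamily

theorem prod_ofFn_kronecker {m N R : Type*} [CommRing R] [Fintype m] [DecidableEq m] [Fintype N]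
    [DecidableEq N] (B : Matrix m m R) {n : ℕ} (C : Fin n → Matrix N N R) :
    (List.ofFn fun i ↦ B ⊗ₖ C i).prod = (B ^ n) ⊗ₖ (List.ofFn C).prod := by
  induction n with
  | zero => simp
  | succ n ih =>
    simp only [List.ofFn_succ, List.prod_cons]
    rw [ih, ← Matrix.mul_kronecker_mul, pow_succ']

theorem kronecker_one_anticomm {m N R : Type*} [CommRing R] [Fintype m] [Fintype N]
    [DecidableEq N] {B C : Matrix m m R} (hBC : B * C = -(C * B)) (D : Matrix N N R) :
    (B ⊗ₖ D) * (C ⊗ₖ 1) = -((C ⊗ₖ 1) * (B ⊗ₖ D)) := by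
  rw [← Matrix.mul_kronecker_mul, ← Matrix.mul_kronecker_mul, mul_one, one_mul, hBC,
    ← neg_one_smul R, Matrix.smul_kronecker, neg_one_smul]

theorem kronecker_one_mul_self {m N R : Type*} [CommRing R] [Fintype m] [DecidableEq m]
    [Fintype N] [DecidableEq N] {B : Matrix m m R} (hB : B * B = 1) :
    (B ⊗ₖ (1 : Matrix N N R)) * (B ⊗ₖ 1) = 1 := by
  rw [← Matrix.mul_kronecker_mul, mul_one, hB, Matrix.one_kronecker_one]

theorem pauli1_mul_self : pauli1 * pauli1 = 1 := by
  ext i j; fin_cases i <;> fin_cases j <;> simp [pauli1]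

theorem pauli2_mul_self : pauli2 * pauli2 = 1 := by
  ext i j; fin_cases i <;> fin_cases j <;> simp [pauli2]

theorem pauli3_mul_self : pauli3 * pauli3 = 1 := by
  ext i j; fin_cases i <;> fin_cases j <;> simp [pauli3]

theorem pauli1_mul_pauli2 : pauli1 * pauli2 = Complex.I • pauli3 := by
  ext i j; fin_cases i <;> fin_cases j <;> simp [pauli1, pauli2, pauli3]

theorem pauli1_mul_pauli2_anticomm : pauli1 * pauli2 = -(pauli2 * pauli1) := by
  ext i j; fin_cases i <;> fin_cases j <;> simp [pauli1, pauli2]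

theorem pauli1_mul_pauli3_anticomm : pauli1 * pauli3 = -(pauli3 * pauli1) := by
  ext i j; fin_cases i <;> fin_cases j <;> simp [pauli1, pauli3]

theorem pauli2_mul_pauli3_anticomm : pauli2 * pauli3 = -(pauli3 * pauli2) := by
  ext i j; fin_cases i <;> fin_cases j <;> simp [pauli2, pauli3]

section PauliExtend

variable {N : Type*} [DecidableEq N] {n : ℕ}

/-- One step of the recursive construction of the Dirac matrices, before the index set
`Fin 2 × N` is flattened: the family `σ₁ ⊗ γ₁, …, σ₁ ⊗ γₙ, σ₂ ⊗ 1, σ₃ ⊗ 1`. -/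
noncomputable def pauliExtend (γ : Fin n → Matrix N N ℂ) :
    Fin (n + 2) → Matrix (Fin 2 × N) (Fin 2 × N) ℂ :=
  Fin.snoc (Fin.snoc (fun j ↦ pauli1 ⊗ₖ γ j) (pauli2 ⊗ₖ 1)) (pauli3 ⊗ₖ 1)

variable [Fintype N] {γ : Fin n → Matrix N N ℂ}

theorem IsCliffordFamily.pauliExtend (hγ : IsCliffordFamily γ) :
    IsCliffordFamily (pauliExtend γ) := by
  refine ((hγ.kronecker pauli1_mul_self).snoc (kronecker_one_mul_self pauli2_mul_self) fun i ↦
    kronecker_one_anticomm pauli1_mul_pauli2_anticomm (γ i)).snoc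
      (kronecker_one_mul_self pauli3_mul_self) fun i ↦ ?_
  cases i using Fin.lastCases with
  | last => simpa using kronecker_one_anticomm pauli2_mul_pauli3_anticomm 1
  | cast i => simpa using kronecker_one_anticomm pauli1_mul_pauli3_anticomm (γ i)

theorem prod_ofFn_pauliExtend (hn : Odd n) :
    (List.ofFn (pauliExtend γ)).prod = Complex.I • (1 ⊗ₖ (List.ofFn γ).prod) := by
  have pauli1_pow : pauli1 ^ n = pauli1 := by
    obtain ⟨m, rfl⟩ := hn
    rw [pow_succ, pow_mul, sq, pauli1_mul_self, one_pow, one_mul]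
  simp only [pauliExtend, List.ofFn_succ', List.prod_concat, Fin.snoc_castSucc, Fin.snoc_last]
  rw [prod_ofFn_kronecker, ← Matrix.mul_kronecker_mul, ← Matrix.mul_kronecker_mul, mul_one, mul_one,
    pauli1_pow, pauli1_mul_pauli2, smul_mul_assoc, pauli3_mul_self, Matrix.smul_kronecker]

end PauliExtend

/-- The Dirac matrices `γ¹, …, γ^{2κ+1}` as a family indexed from `0`. -/
noncomputable def diracFamily (κ : ℕ) (j : Fin (2 * κ + 1)) :
    Matrix (Fin (2 ^ κ)) (Fin (2 ^ κ)) ℂ :=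
  diracGamma κ (j + 1)

/-- The flattening of the index set `Fin 2 × Fin (2 ^ κ)` in the Dirac recursion, as an
isomorphism of matrix algebras. -/
noncomputable def diracReindex (κ : ℕ) :
    Matrix (Fin 2 × Fin (2 ^ κ)) (Fin 2 × Fin (2 ^ κ)) ℂ ≃ₐ[ℂ]
      Matrix (Fin (2 ^ (κ + 1))) (Fin (2 ^ (κ + 1))) ℂ :=
  Matrix.reindexAlgEquiv ℂ ℂ (finProdFinEquiv.trans (finCongr (pow_succ' 2 κ).symm))

theorem castSq_kron2 {κ : ℕ} (h : 2 * 2 ^ κ = 2 ^ (κ + 1)) (A : Matrix (Fin 2) (Fin 2) ℂ)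
    (B : Matrix (Fin (2 ^ κ)) (Fin (2 ^ κ)) ℂ) :
    castSq h (kron2 A B) = diracReindex κ (A ⊗ₖ B) :=
  rfl

theorem castSq_eq_diracReindex_zero (h : 2 = 2 ^ 1) (A : Matrix (Fin 2) (Fin 2) ℂ) :
    castSq h A = diracReindex 0 (A ⊗ₖ 1) := by
  have one_eq_const : (1 : Matrix (Fin (2 ^ 0)) (Fin (2 ^ 0)) ℂ) = Matrix.of fun _ _ ↦ 1 := by
    ext i j
    rw [Subsingleton.elim (α := Fin 1) i j, Matrix.one_apply_eq, Matrix.of_apply]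
  ext i j
  fin_cases i <;> fin_cases j <;>
    simp [castSq, diracReindex, finProdFinEquiv, Fin.divNat, one_eq_const]

theorem diracGamma_succ_of_lt {κ j : ℕ} (hj : j < 2 * κ + 1) :
    diracGamma (κ + 1) (j + 1) = diracReindex κ (pauli1 ⊗ₖ diracGamma κ (j + 1)) := by
  cases κ with
  | zero =>
    obtain rfl : j = 0 := by omega
    simp [diracGamma, castSq_eq_diracReindex_zero]
  | succ κ =>
    rw [diracGamma, if_pos (by omega), castSq_kron2]

theorem diracGamma_succ_two_mul_add_two (κ : ℕ) :
    diracGamma (κ + 1) (2 * κ + 2) = diracReindex κ (pauli2 ⊗ₖ 1) := by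
  cases κ with
  | zero => simp [diracGamma, castSq_eq_diracReindex_zero]
  | succ κ => rw [diracGamma, if_neg (by omega), if_pos rfl, castSq_kron2]

theorem diracGamma_succ_two_mul_add_three (κ : ℕ) :
    diracGamma (κ + 1) (2 * κ + 3) = diracReindex κ (pauli3 ⊗ₖ 1) := by
  cases κ with
  | zero => simp [diracGamma, castSq_eq_diracReindex_zero]
  | succ κ => rw [diracGamma, if_neg (by omega), if_neg (by omega), if_pos rfl, castSq_kron2]

theorem diracFamily_succ (κ : ℕ) :
    diracFamily (κ + 1) = diracReindex κ ∘ pauliExtend (diracFamily κ) := by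
  funext j
  rw [Function.comp_apply]
  unfold pauliExtend
  cases j using Fin.lastCases (n := 2 * κ + 2) with
  | last =>
    rw [Fin.snoc_last]
    exact diracGamma_succ_two_mul_add_three κ
  | cast j =>
    rw [Fin.snoc_castSucc]
    cases j using Fin.lastCases with
    | last =>
      rw [Fin.snoc_last]
      exact diracGamma_succ_two_mul_add_two κ
    | cast j =>
      rw [Fin.snoc_castSucc]
      exact diracGamma_succ_of_lt j.isLt

theorem isCliffordFamily_diracFamily (κ : ℕ) : IsCliffordFamily (diracFamily κ) := by
  induction κ with
  | zero =>
    exact ⟨fun _ ↦ by simp [diracFamily, diracGamma], fun i j hij ↦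
      absurd (Subsingleton.elim (α := Fin 1) i j) hij⟩
  | succ κ ih =>
    rw [diracFamily_succ]
    exact ih.pauliExtend.map (diracReindex κ)

theorem prod_ofFn_diracFamily (κ : ℕ) :
    (List.ofFn (diracFamily κ)).prod = Complex.I ^ κ • 1 := by
  induction κ with
  | zero => simp [diracFamily, diracGamma]
  | succ κ ih =>
    have prod_pauliExtend :
        (List.ofFn (n := 2 * (κ + 1) + 1) (pauliExtend (diracFamily κ))).prod =
          Complex.I • (1 ⊗ₖ (List.ofFn (diracFamily κ)).prod) :=
      prod_ofFn_pauliExtend (odd_two_mul_add_one κ)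
    rw [diracFamily_succ, ← List.map_ofFn, ← map_list_prod, prod_pauliExtend, ih,
      Matrix.kronecker_smul, Matrix.one_kronecker_one, smul_smul, map_smul, map_one, ← pow_succ']

theorem trace_prod_ofFn_diracFamily (κ : ℕ) :
    (List.ofFn (diracFamily κ)).prod.trace = (2 * Complex.I) ^ κ := by
  rw [prod_ofFn_diracFamily, Matrix.trace_smul, Matrix.trace_one, Fintype.card_fin, smul_eq_mul,
    Nat.cast_pow, Nat.cast_ofNat, mul_comm, mul_pow]

end Dirac

section Projector

variable {N : Type*} [DecidableEq N] {ι : Type*} [Fintype ι]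

/-- The Fermi projector `1/2 - (x/(2|x|))·γ` of the Hamiltonian `x·γ`, that is, the spectral
projector onto its negative energies when `γ` is a Clifford family of Hermitian matrices and
`x ≠ 0`. At `x = 0` division by zero makes it `1/2`. -/
noncomputable def fermiProjector (γ : ι → Matrix N N ℂ) (x : EuclideanSpace ℝ ι) : Matrix N N ℂ :=
  ((1 : ℂ) / 2) • (1 : Matrix N N ℂ) - ∑ j, ((x j / (2 * ‖x‖) : ℝ) : ℂ) • γ j

theorem fermiProjector_eq (γ : ι → Matrix N N ℂ) (x : EuclideanSpace ℝ ι) :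
    fermiProjector γ x =
      (1 / 2 : ℝ) • 1 + Fintype.linearCombination ℝ γ ((-(2 * ‖x‖)⁻¹) • x).ofLp := by
  ext a b
  simp [fermiProjector, Fintype.linearCombination_apply, Matrix.sum_apply, Matrix.one_apply,
    div_eq_inv_mul, sub_eq_add_neg]

variable {E : Type*} [NormedAddCommGroup E] [NormedSpace ℝ E]
  {h : E → EuclideanSpace ℝ ι} {k : E}

theorem fderiv_fermiProjector_comp [Finite N] (γ : ι → Matrix N N ℂ)
    (hdiff : DifferentiableAt ℝ h k) (hk : h k ≠ 0) (e : E) :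
    fderiv ℝ (fun x ↦ fermiProjector γ (h x)) k e =
      Fintype.linearCombination ℝ γ
        ((-(2 * ‖h k‖)⁻¹) • (fderiv ℝ h k e).ofLp +
          fderiv ℝ (fun x ↦ -(2 * ‖h x‖)⁻¹) k e • (h k).ofLp) := by
  cases nonempty_fintype N
  let S : EuclideanSpace ℝ ι →L[ℝ] Matrix N N ℂ := LinearMap.toContinuousLinearMap
    (Fintype.linearCombination ℝ γ ∘ₗ (WithLp.linearEquiv 2 ℝ (ι → ℝ)).toLinearMap)
  have hcoeff : DifferentiableAt ℝ (fun x ↦ -(2 * ‖h x‖)⁻¹) k :=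
    (((hdiff.norm ℝ hk).const_mul 2).inv (by simpa using hk)).neg
  have hderiv := (S.hasFDerivAt.comp k
    (hcoeff.hasFDerivAt.smul hdiff.hasFDerivAt)).const_add ((1 / 2 : ℝ) • (1 : Matrix N N ℂ))
  simp only [fermiProjector_eq]
  exact congrArg (· e) hderiv.fderiv

end Projector

theorem projector_trace_degree_even_general {N E : Type*} [Fintype N] [DecidableEq N]
    [NormedAddCommGroup E] [NormedSpace ℝ E] {n : ℕ} (hn : n ≠ 0) (hn_even : Even n)
    {γ : Fin (n + 1) → Matrix N N ℂ} (hγ : IsCliffordFamily γ)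
    {h : E → EuclideanSpace ℝ (Fin (n + 1))} {k : E} (hk : h k ≠ 0)
    (hdiff : DifferentiableAt ℝ h k) (e : Fin n → E) :
    ∑ ρ : Equiv.Perm (Fin n), ((Equiv.Perm.sign ρ : ℤ) : ℂ) *
        Matrix.trace (fermiProjector γ (h k) *
          (List.ofFn fun i ↦ fderiv ℝ (fun x ↦ fermiProjector γ (h x)) k (e (ρ i))).prod) =
      -(Matrix.trace (List.ofFn γ).prod * (n.factorial : ℂ) / 2 ^ (n + 1)) *
        ((Matrix.of (Fin.cons (h k).ofLp fun j ↦ (fderiv ℝ h k (e j)).ofLp)).det : ℝ) /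
          ((‖h k‖ : ℝ) : ℂ) ^ (n + 1) := by
  have trace_sum := hγ.sum_sign_smul_tracial_mul_prod
    (τ := Matrix.traceLinearMap N ℝ ℂ) Matrix.trace_mul_comm hn hn_even (1 / 2)
    ((-(2 * ‖h k‖)⁻¹) • (h k).ofLp) fun j ↦ (-(2 * ‖h k‖)⁻¹) • (fderiv ℝ h k (e j)).ofLp +
      fderiv ℝ (fun x ↦ -(2 * ‖h x‖)⁻¹) k (e j) • (h k).ofLp
  rw [det_cons_smul_add_smul] at trace_sum
  simp only [Matrix.traceLinearMap_apply, zsmul_eq_mul] at trace_sum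
  simp only [fderiv_fermiProjector_comp γ hdiff hk]
  simp only [fermiProjector_eq, WithLp.ofLp_smul]
  rw [trace_sum, hn_even.add_one.neg_pow, nsmul_eq_mul, Complex.real_smul]
  push_cast
  rw [inv_pow, mul_pow]
  ring

/-- Even-dimensional geometric identity for the Fermi projector of `H(k) = h(k)·Γ`:
`Σ_ρ sgn(ρ) tr(P ∂_{ρ(1)}P ⋯ ∂_{ρ(d)}P) = −((2i)^{d/2} d!/2^{d+1}) det(L)/|h|^{d+1}`
where `L` has first row `h(k)` and remaining rows `∂h/∂k_j(k)`. -/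
theorem projector_trace_degree_even (κ : ℕ) (hκ : 1 ≤ κ)
    (h : EuclideanSpace ℝ (Fin (2 * κ)) → EuclideanSpace ℝ (Fin (2 * κ + 1)))
    (k : EuclideanSpace ℝ (Fin (2 * κ)))
    (hne : ∀ x, h x ≠ 0)
    (hdiff : DifferentiableAt ℝ h k) :
    let P : EuclideanSpace ℝ (Fin (2 * κ)) → Matrix (Fin (2 ^ κ)) (Fin (2 ^ κ)) ℂ :=
      fun k' => ((1 : ℂ) / 2) • (1 : Matrix (Fin (2 ^ κ)) (Fin (2 ^ κ)) ℂ) -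
        ∑ j : Fin (2 * κ + 1), ((h k' j / (2 * ‖h k'‖) : ℝ) : ℂ) • diracGamma κ ((j : ℕ) + 1)
    let pdP : Fin (2 * κ) → Matrix (Fin (2 ^ κ)) (Fin (2 ^ κ)) ℂ :=
      fun j => fderiv ℝ P k (EuclideanSpace.single j 1)
    let L : Matrix (Fin (2 * κ + 1)) (Fin (2 * κ + 1)) ℝ :=
      Matrix.of (Fin.cons (fun l => h k l)
        (fun (j : Fin (2 * κ)) (l : Fin (2 * κ + 1)) =>
          fderiv ℝ h k (EuclideanSpace.single j 1) l))
    ∑ ρ : Equiv.Perm (Fin (2 * κ)), ((Equiv.Perm.sign ρ : ℤ) : ℂ) *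
        Matrix.trace (P k * (List.ofFn fun i : Fin (2 * κ) => pdP (ρ i)).prod)
      = -((2 * Complex.I) ^ κ * (Nat.factorial (2 * κ) : ℂ) / 2 ^ (2 * κ + 1)) *
          ((L.det : ℝ) : ℂ) / ((‖h k‖ : ℝ) : ℂ) ^ (2 * κ + 1) := by
  rw [← trace_prod_ofFn_diracFamily]
  exact projector_trace_degree_even_general (by omega) (even_two_mul κ)
    (isCliffordFamily_diracFamily κ) (hne k) hdiff fun j ↦ EuclideanSpace.single j 1
end

section
/- Let g : ℝ → [0, ∞) be measurable, and let χ denote the indicator function of (0, ∞). Then ∫_{ℝ²} (χ(y) − χ(y'))² · g(y − y') dy dy' = ∫_ℝ |z| · g(z) dz, where both sides are Lebesgue integrals (possibly infinite). -/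
open MeasureTheory

/-! Substituting `y = z + y'` turns the left-hand side into an iterated integral in which `g z` is
weighted by the measure of the set of `y'` for which `z + y'` and `y'` lie on different sides of
the origin. That set is an interval with endpoints `0` and `-z`, so its measure is `|z|`. -/

open scoped ENNReal

section Shear

variable {G : Type*} [AddGroup G] [MeasurableSpace G] [MeasurableAdd₂ G]
  {μ ν : Measure G} [SFinite μ] [SFinite ν] [μ.IsAddRightInvariant]

theorem lintegral_prod_eq_lintegral_lintegral_add {f : G × G → ℝ≥0∞}
    (hf : AEMeasurable f (μ.prod ν)) :
    ∫⁻ p, f p ∂μ.prod ν = ∫⁻ z, ∫⁻ y, f (z + y, y) ∂ν ∂μ := by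
  have shear : MeasurePreserving (fun p : G × G ↦ (p.1 + p.2, p.2)) (μ.prod ν) (μ.prod ν) :=
    measurePreserving_add_prod μ ν
  calc ∫⁻ p, f p ∂μ.prod ν
      = ∫⁻ p, f (p.1 + p.2, p.2) ∂μ.prod ν := by
        conv_lhs => rw [← shear.map_eq]
        exact lintegral_map' (by rwa [shear.map_eq]) shear.aemeasurable
    _ = ∫⁻ z, ∫⁻ y, f (z + y, y) ∂ν ∂μ :=
        lintegral_prod _ (hf.comp_quasiMeasurePreserving shear.quasiMeasurePreserving)

theorem lintegral_prod_mul_comp_sub [MeasurableNeg G] {k : G × G → ℝ≥0∞} {g : G → ℝ≥0∞}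
    (hk : AEMeasurable k (μ.prod ν)) (hg : AEMeasurable g μ) :
    ∫⁻ p, k p * g (p.1 - p.2) ∂μ.prod ν = ∫⁻ z, (∫⁻ y, k (z + y, y) ∂ν) * g z ∂μ := by
  have hg_sub : AEMeasurable (fun p : G × G ↦ g (p.1 - p.2)) (μ.prod ν) :=
    hg.comp_quasiMeasurePreserving (quasiMeasurePreserving_sub_of_right_invariant μ ν)
  have hk_shear : AEMeasurable (fun p : G × G ↦ k (p.1 + p.2, p.2)) (μ.prod ν) :=
    hk.comp_quasiMeasurePreserving (measurePreserving_add_prod μ ν).quasiMeasurePreserving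
  rw [lintegral_prod_eq_lintegral_lintegral_add (hk.fun_mul hg_sub)]
  simp only [add_sub_cancel_right]
  refine lintegral_congr_ae ?_
  filter_upwards [hk_shear.aestronglyMeasurable.prodMk_left] with z hk_z
  exact lintegral_mul_const'' (g z) hk_z.aemeasurable

end Shear

theorem sq_ite_one_zero_sub_ite_one_zero {R : Type*} [Ring R] (p q : Prop) [Decidable p]
    [Decidable q] :
    ((if p then (1 : R) else 0) - (if q then 1 else 0)) ^ 2 = if (p ↔ q) then 0 else 1 := by
  by_cases hp : p <;> by_cases hq : q <;> simp [hp, hq]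

theorem mem_uIoc_zero_neg_iff {α : Type*} [AddCommGroup α] [LinearOrder α] [IsOrderedAddMonoid α]
    {y z : α} : y ∈ Set.uIoc 0 (-z) ↔ ¬(0 < z + y ↔ 0 < y) := by
  have add_pos_iff : 0 < z + y ↔ -z < y := neg_lt_iff_pos_add'.symm
  rw [Set.mem_uIoc, add_pos_iff, ← not_lt, ← not_lt]
  tauto

theorem lintegral_sq_ite_pos_add_sub_ite_pos (z : ℝ) :
    ∫⁻ y : ℝ, ENNReal.ofReal
        (((if 0 < z + y then (1 : ℝ) else 0) - (if 0 < y then (1 : ℝ) else 0)) ^ 2)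
      = ENNReal.ofReal |z| := by
  have integrand_eq (y : ℝ) : ENNReal.ofReal
      (((if 0 < z + y then (1 : ℝ) else 0) - (if 0 < y then (1 : ℝ) else 0)) ^ 2)
        = (Set.uIoc 0 (-z)).indicator 1 y := by
    classical
    rw [sq_ite_one_zero_sub_ite_one_zero, Set.indicator_apply, mem_uIoc_zero_neg_iff]
    split_ifs <;> simp
  simp only [integrand_eq]
  rw [lintegral_indicator_one measurableSet_uIoc, Real.volume_uIoc, sub_zero, abs_neg]

theorem indicator_difference_integral_general {g : ℝ → ℝ≥0∞} (hg : AEMeasurable g) :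
    ∫⁻ p : ℝ × ℝ, ENNReal.ofReal
        (((if 0 < p.1 then (1 : ℝ) else 0) - (if 0 < p.2 then (1 : ℝ) else 0)) ^ 2)
          * g (p.1 - p.2)
      = ∫⁻ z : ℝ, ENNReal.ofReal |z| * g z := by
  have measurable_ite_pos : Measurable fun y : ℝ ↦ if 0 < y then (1 : ℝ) else 0 :=
    Measurable.ite measurableSet_Ioi measurable_const measurable_const
  have measurable_kernel : Measurable fun p : ℝ × ℝ ↦ ENNReal.ofReal
      (((if 0 < p.1 then (1 : ℝ) else 0) - (if 0 < p.2 then (1 : ℝ) else 0)) ^ 2) :=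
    (((measurable_ite_pos.comp measurable_fst).sub
      (measurable_ite_pos.comp measurable_snd)).pow_const 2).ennreal_ofReal
  rw [Measure.volume_eq_prod, lintegral_prod_mul_comp_sub measurable_kernel.aemeasurable hg]
  simp only [lintegral_sq_ite_pos_add_sub_ite_pos]

/-- For a nonnegative measurable `g` and `χ` the indicator of `(0, ∞)`:
`∫_{ℝ²} (χ(y) − χ(y'))² g(y − y') dy dy' = ∫_ℝ |z| g(z) dz` (as Lebesgue integrals,
possibly infinite). -/
theorem indicator_difference_integral (g : ℝ → ℝ) (hg : Measurable g) (hg0 : ∀ y, 0 ≤ g y) :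
    ∫⁻ p : ℝ × ℝ, ENNReal.ofReal
        (((if 0 < p.1 then (1 : ℝ) else 0) - (if 0 < p.2 then (1 : ℝ) else 0)) ^ 2
          * g (p.1 - p.2))
      = ∫⁻ z : ℝ, ENNReal.ofReal (|z| * g z) := by
  simpa only [ENNReal.ofReal_mul (sq_nonneg _), ENNReal.ofReal_mul (abs_nonneg _)]
    using indicator_difference_integral_general hg.ennreal_ofReal.aemeasurable
end
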